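/- For L ≥ 1 and ε ∈ (0,1) with εL ≥ 1, the function u on ℤ^d/(2L+1)ℤ^d whose discrete Fourier transform is û(γ) = (2⌊εL⌋+1)^{-d/2} for |γ| ≤ εL and û(γ) = 0 otherwise, satisfies ‖u‖₂ = 1, ⟨-Δ_L^P u, u⟩ ≤ Cε², and ‖u‖₄ ≥ ε^{d/4}/C for a constant C depending only on d. -/

import Mathlib

open Finset

/-- The discrete torus `ℤ^d/(2L+1)ℤ^d`, i.e. the cube `Λ_L = [-L,L]^d ∩ ℤ^d`
with periodic identification. -/
abbrev DTorus (d L : ℕ) := Fin d → ZMod (2 * L + 1)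

/-- The discrete Laplacian `-Δ` with periodic boundary conditions:
`(-Δu)(β) = Σ_{j} (2u(β) - u(β+e_j) - u(β-e_j))`. -/
noncomputable def dLap (d L : ℕ) (u : DTorus d L → ℂ) (β : DTorus d L) : ℂ :=
  ∑ j : Fin d,
    (2 * u β - u (β + fun i => if i = j then 1 else 0)
      - u (β - fun i => if i = j then 1 else 0))

/-- The discrete Dirichlet energy `⟨-Δ_L^P u, u⟩`. -/
noncomputable def dEnergy (d L : ℕ) (u : DTorus d L → ℂ) : ℝ :=
  (∑ β : DTorus d L, (starRingEnd ℂ) (u β) * dLap d L u β).re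

/-- The discrete Fourier transform
`û(γ) = (2L+1)^{-d/2} Σ_β u(β) e^{-2πi γ·β/(2L+1)}`. -/
noncomputable def dft (d L : ℕ) (u : DTorus d L → ℂ) (γ : DTorus d L) : ℂ :=
  (((2 * L + 1 : ℝ) ^ (-(d : ℝ) / 2) : ℝ) : ℂ) *
    ∑ β : DTorus d L, u β *
      Complex.exp (-2 * Real.pi * Complex.I *
        ((∑ j : Fin d, (γ j).val * (β j).val : ℕ) : ℂ) / ((2 * L + 1 : ℕ) : ℂ))

/-- The symbol of the discrete Laplacian:
`h(γ) = 2d - 2 Σ_j cos(2πγ_j/(2L+1))`. -/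
noncomputable def dSymb (d L : ℕ) (γ : DTorus d L) : ℝ :=
  2 * d - 2 * ∑ j : Fin d, Real.cos (2 * Real.pi * (γ j).val / (2 * L + 1))

/-- The absolute value `|x|` of `x ∈ ℤ/(2L+1)ℤ` for the representative in `[-L, L]`. -/
def dAbs (L : ℕ) (x : ZMod (2 * L + 1)) : ℕ := min x.val (2 * L + 1 - x.val)

/-!
By Parseval, the energy of a function whose Fourier transform lives on a set `S` is at most
`max_S h · ‖u‖₂²`, where `h` is the symbol of the Laplacian.

For the `ℓ⁴` norm, let `N = 2L + 1`. The transform of `u²` is supported on `S + S`, so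
Cauchy–Schwarz in the inversion formula bounds the single value `|u(0)|⁴` by
`N^{-d} |S + S| ‖u‖₄⁴`. When `û` is constant on `S` and `‖u‖₂ = 1`, `|u(0)|²` equals `N^{-d} |S|`,
whence `‖u‖₄⁴ ≥ N^{-d} |S|² / |S + S|`. A cube has doubling `|S + S| ≤ 2^d |S|`, and for
`S = {|γ| ≤ εL}` the density `N^{-d} |S|` is comparable to `ε^d`.
-/

namespace DTorus

open scoped Pointwise ComplexConjugate

variable {d L : ℕ}

section Characters

/-- The character `β ↦ e^{2πi γ·β/(2L+1)}` of the discrete torus with frequency `γ`. -/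
noncomputable def char (γ : DTorus d L) : AddChar (DTorus d L) ℂ :=
  ZMod.stdAddChar.compAddMonoidHom (AddMonoidHom.mk' (γ ⬝ᵥ ·) (dotProduct_add γ))

lemma char_apply (γ β : DTorus d L) : char γ β = ZMod.stdAddChar (γ ⬝ᵥ β) := rfl

lemma char_comm (γ β : DTorus d L) : char γ β = char β γ := by
  rw [char_apply, char_apply, dotProduct_comm]

lemma char_single_one (γ : DTorus d L) (j : Fin d) :
    char γ (Pi.single j 1) = ZMod.stdAddChar (γ j) := by
  rw [char_apply, dotProduct_single_one]

lemma char_eq_zero_iff {γ : DTorus d L} : char γ = 0 ↔ γ = 0 := by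
  refine ⟨fun h => funext fun j => ZMod.injective_stdAddChar ?_, ?_⟩
  · rw [← char_single_one, h, Pi.zero_apply, AddChar.map_zero_eq_one, AddChar.zero_apply]
  · rintro rfl
    ext β
    rw [char_apply, zero_dotProduct, AddChar.map_zero_eq_one, AddChar.zero_apply]

lemma sum_char (β : DTorus d L) :
    ∑ γ, char γ β = if β = 0 then (2 * L + 1 : ℂ) ^ d else 0 := by
  classical
  simp_rw [char_comm _ β, AddChar.sum_eq_ite, char_eq_zero_iff]
  simp

lemma re_stdAddChar {N : ℕ} [NeZero N] (x : ZMod N) :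
    (ZMod.stdAddChar x).re = Real.cos (2 * Real.pi * x.val / N) := by
  rw [ZMod.stdAddChar_apply, ZMod.toCircle_eq_circleExp, Circle.coe_exp,
    Complex.exp_ofReal_mul_I_re, mul_div_assoc]

end Characters

section Fourier

lemma sq_rpow_neg_div_two {x : ℝ} (hx : 0 ≤ x) (a : ℝ) : (x ^ (-a / 2)) ^ 2 = (x ^ a)⁻¹ := by
  rw [← Real.rpow_mul_natCast hx, Nat.cast_ofNat, div_mul_cancel₀ _ two_ne_zero, Real.rpow_neg hx]

/-- The factor `(2L+1)^{-d/2}` which makes the discrete Fourier transform unitary. -/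
noncomputable def normalization (d L : ℕ) : ℝ := (2 * L + 1 : ℝ) ^ (-(d : ℝ) / 2)

lemma normalization_sq_mul (d L : ℕ) : normalization d L ^ 2 * (2 * L + 1 : ℝ) ^ d = 1 := by
  rw [normalization, sq_rpow_neg_div_two (by positivity), Real.rpow_natCast,
    inv_mul_cancel₀ (by positivity)]

lemma dft_apply (u : DTorus d L → ℂ) (γ : DTorus d L) :
    dft d L u γ = normalization d L * ∑ β, u β * char γ (-β) := by
  have hchar : ∀ β : DTorus d L, char γ (-β) =
      ZMod.stdAddChar (((-∑ j, (γ j).val * (β j).val : ℤ)) : ZMod (2 * L + 1)) := by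
    simp [char_apply, dotProduct]
  simp_rw [hchar, ZMod.stdAddChar_coe, dft, normalization]
  congr! 5
  push_cast
  ring

lemma eq_sum_dft_mul_char (u : DTorus d L → ℂ) (β : DTorus d L) :
    u β = normalization d L * ∑ γ, dft d L u γ * char γ β := by
  have hsum : ∑ γ, dft d L u γ * char γ β
      = normalization d L * ((2 * L + 1 : ℂ) ^ d * u β) := by
    simp_rw [dft_apply, mul_assoc, ← mul_sum, sum_mul, mul_assoc, ← AddChar.map_add_eq_mul]
    rw [sum_comm]
    simp_rw [← mul_sum, sum_char, neg_add_eq_zero]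
    simp [mul_comm]
  have hnorm : (normalization d L : ℂ) ^ 2 * (2 * L + 1 : ℂ) ^ d = 1 := by
    exact_mod_cast normalization_sq_mul d L
  rw [hsum]
  linear_combination (-u β) * hnorm

lemma conj_dft (u : DTorus d L → ℂ) (γ : DTorus d L) :
    conj (dft d L u γ) = normalization d L * ∑ β, conj (u β) * char γ β := by
  simp [dft_apply, ← AddChar.map_neg_eq_conj]

lemma sum_conj_mul_eq_sum_conj_dft_mul_dft (u v : DTorus d L → ℂ) :
    ∑ β, conj (u β) * v β = ∑ γ, conj (dft d L u γ) * dft d L v γ := by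
  calc ∑ β, conj (u β) * v β
      = ∑ β, ∑ γ, conj (u β) * (normalization d L * (dft d L v γ * char γ β)) := by
        simp_rw [← mul_sum, ← eq_sum_dft_mul_char]
    _ = ∑ γ, conj (dft d L u γ) * dft d L v γ := by
        rw [sum_comm]
        simp_rw [conj_dft, mul_sum, sum_mul]
        exact sum_congr rfl fun γ _ => sum_congr rfl fun β _ => by ring

lemma sum_norm_sq_eq_sum_norm_dft_sq (u : DTorus d L → ℂ) :
    ∑ β, ‖u β‖ ^ 2 = ∑ γ, ‖dft d L u γ‖ ^ 2 := by
  have h := sum_conj_mul_eq_sum_conj_dft_mul_dft u u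
  simp_rw [Complex.conj_mul'] at h
  exact_mod_cast h

lemma dft_comp_add_right (u : DTorus d L → ℂ) (b γ : DTorus d L) :
    dft d L (fun β => u (β + b)) γ = char γ b * dft d L u γ := by
  have h : ∑ β, u (β + b) * char γ (-β) = char γ b * ∑ β, u β * char γ (-β) := by
    rw [← Equiv.sum_comp (Equiv.addRight b) (fun β => u β * char γ (-β)), mul_sum]
    refine sum_congr rfl fun β _ => ?_
    rw [mul_left_comm, ← AddChar.map_add_eq_mul, Equiv.coe_addRight, neg_add_rev,
      add_neg_cancel_left]
  rw [dft_apply, dft_apply, h, mul_left_comm]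

lemma dft_mul (u v : DTorus d L → ℂ) (γ : DTorus d L) :
    dft d L (u * v) γ = normalization d L * ∑ η, dft d L u η * dft d L v (γ - η) := by
  have hterm : ∀ β, u β * v β * char γ (-β)
      = normalization d L * ∑ η, dft d L u η * (v β * char (γ - η) (-β)) := by
    intro β
    have hchar : ∀ η : DTorus d L, char (γ - η) (-β) = char η β * char γ (-β) := by
      intro η
      simp_rw [char_apply, ← AddChar.map_add_eq_mul, sub_dotProduct, dotProduct_neg]
      congr 1
      abel
    rw [eq_sum_dft_mul_char u β]
    simp_rw [hchar, mul_sum, sum_mul]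
    exact sum_congr rfl fun η _ => by ring
  simp_rw [dft_apply (u * v), Pi.mul_apply, hterm, dft_apply v, ← mul_sum]
  rw [sum_comm]
  simp_rw [mul_left_comm _ (normalization d L : ℂ), ← mul_sum]

end Fourier

section Laplacian

lemma dLap_apply (u : DTorus d L → ℂ) (β : DTorus d L) :
    dLap d L u β = ∑ j, (2 * u β - u (β + Pi.single j 1) - u (β + -Pi.single j 1)) := by
  have hsingle : ∀ j : Fin d,
      (fun i => if i = j then 1 else 0) = (Pi.single j 1 : DTorus d L) := fun j => by
    ext i
    rw [Pi.single_apply]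
  simp_rw [dLap, hsingle, sub_eq_add_neg]

lemma dSymb_eq_sum (γ : DTorus d L) :
    dSymb d L γ = ∑ j, (2 - 2 * Real.cos (2 * Real.pi * (γ j).val / (2 * L + 1))) := by
  simp [dSymb, mul_sum, mul_comm]

lemma dft_dLap (u : DTorus d L → ℂ) (γ : DTorus d L) :
    dft d L (dLap d L u) γ = dSymb d L γ * dft d L u γ := by
  have hlin : dft d L (dLap d L u) γ = ∑ j, (2 * dft d L u γ
      - dft d L (fun β => u (β + Pi.single j 1)) γ
      - dft d L (fun β => u (β + -Pi.single j 1)) γ) := by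
    simp_rw [dft_apply, dLap_apply, sum_mul]
    rw [sum_comm, mul_sum]
    simp_rw [mul_left_comm (2 : ℂ), ← mul_sub, mul_sum, ← sum_sub_distrib, sub_mul, mul_assoc,
      ← mul_sum]
  have hsymb : ∀ j, ((2 - 2 * Real.cos (2 * Real.pi * (γ j).val / (2 * L + 1)) : ℝ) : ℂ)
      = 2 - char γ (Pi.single j 1) - char γ (-Pi.single j 1) := by
    intro j
    rw [AddChar.map_neg_eq_conj, sub_sub, Complex.add_conj, char_single_one, re_stdAddChar]
    push_cast
    rfl
  simp_rw [hlin, dft_comp_add_right, ← sub_mul, ← sum_mul, ← hsymb, dSymb_eq_sum,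
    Complex.ofReal_sum]

lemma dEnergy_eq_sum_dSymb (u : DTorus d L → ℂ) :
    dEnergy d L u = ∑ γ, dSymb d L γ * ‖dft d L u γ‖ ^ 2 := by
  rw [dEnergy, sum_conj_mul_eq_sum_conj_dft_mul_dft]
  simp_rw [dft_dLap, mul_left_comm _ (dSymb d L _ : ℂ), Complex.conj_mul']
  exact_mod_cast Complex.ofReal_re _

lemma cos_val_eq_cos_dAbs (x : ZMod (2 * L + 1)) :
    Real.cos (2 * Real.pi * x.val / (2 * L + 1)) =
      Real.cos (2 * Real.pi * dAbs L x / (2 * L + 1)) := by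
  obtain h | h := min_choice x.val (2 * L + 1 - x.val)
  · rw [dAbs, h]
  · rw [dAbs, h, Nat.cast_sub (ZMod.val_lt x).le, ← Real.cos_two_pi_sub]
    push_cast
    congr 1
    field_simp

lemma dSymb_le_of_dAbs_le {γ : DTorus d L} {m : ℝ} (hγ : ∀ j, dAbs L (γ j) ≤ m) :
    dSymb d L γ ≤ d * (2 * Real.pi * m / (2 * L + 1)) ^ 2 := by
  have hterm : ∀ j, 2 - 2 * Real.cos (2 * Real.pi * (γ j).val / (2 * L + 1))
      ≤ (2 * Real.pi * m / (2 * L + 1)) ^ 2 := by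
    intro j
    calc 2 - 2 * Real.cos (2 * Real.pi * (γ j).val / (2 * L + 1))
        ≤ (2 * Real.pi * dAbs L (γ j) / (2 * L + 1)) ^ 2 := by
          rw [cos_val_eq_cos_dAbs]
          linarith [Real.one_sub_sq_div_two_le_cos (x := 2 * Real.pi * dAbs L (γ j) / (2 * L + 1))]
      _ ≤ (2 * Real.pi * m / (2 * L + 1)) ^ 2 := by
          gcongr
          exact hγ j
  rw [dSymb_eq_sum]
  simpa using sum_le_card_nsmul univ _ _ fun j _ => hterm j

end Laplacian

section Support

variable {S : Finset (DTorus d L)} {u : DTorus d L → ℂ}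

lemma dEnergy_le_mul_sum_norm_sq (hu : ∀ γ ∉ S, dft d L u γ = 0) {B : ℝ}
    (hB : ∀ γ ∈ S, dSymb d L γ ≤ B) : dEnergy d L u ≤ B * ∑ β, ‖u β‖ ^ 2 := by
  rw [dEnergy_eq_sum_dSymb, sum_norm_sq_eq_sum_norm_dft_sq, mul_sum]
  refine sum_le_sum fun γ _ => ?_
  by_cases hγ : γ ∈ S
  · gcongr
    exact hB γ hγ
  · simp [hu γ hγ]

lemma norm_sq_apply_le_of_dft_support (hu : ∀ γ ∉ S, dft d L u γ = 0) (β : DTorus d L) :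
    (2 * L + 1) ^ d * ‖u β‖ ^ 2 ≤ #S * ∑ β', ‖u β'‖ ^ 2 := by
  have hinv : ‖u β‖ ≤ |normalization d L| * ∑ γ ∈ S, ‖dft d L u γ‖ := by
    rw [eq_sum_dft_mul_char u β,
      ← sum_subset (subset_univ S) fun γ _ hγ => by rw [hu γ hγ, zero_mul], norm_mul,
      Complex.norm_real, Real.norm_eq_abs]
    gcongr
    exact norm_sum_le_of_le _ fun γ _ => by simp
  calc (2 * L + 1) ^ d * ‖u β‖ ^ 2
      ≤ (2 * L + 1) ^ d * (|normalization d L| * ∑ γ ∈ S, ‖dft d L u γ‖) ^ 2 := by gcongr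
    _ = (∑ γ ∈ S, ‖dft d L u γ‖) ^ 2 := by
        rw [mul_pow, sq_abs, ← mul_assoc, mul_comm (_ ^ d), normalization_sq_mul, one_mul]
    _ ≤ #S * ∑ γ ∈ S, ‖dft d L u γ‖ ^ 2 := sq_sum_le_card_mul_sum_sq
    _ ≤ #S * ∑ β', ‖u β'‖ ^ 2 := by
        rw [sum_norm_sq_eq_sum_norm_dft_sq u]
        gcongr
        exact subset_univ S

lemma dft_mul_eq_zero {T : Finset (DTorus d L)} {v : DTorus d L → ℂ}
    (hu : ∀ γ ∉ S, dft d L u γ = 0) (hv : ∀ γ ∉ T, dft d L v γ = 0) {γ : DTorus d L}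
    (hγ : γ ∉ S + T) : dft d L (u * v) γ = 0 := by
  rw [dft_mul, sum_eq_zero, mul_zero]
  intro η _
  by_cases hη : η ∈ S
  · rw [hv (γ - η) fun h => hγ (add_sub_cancel η γ ▸ add_mem_add hη h), mul_zero]
  · rw [hu η hη, zero_mul]

lemma norm_pow_four_apply_le_of_dft_support (hu : ∀ γ ∉ S, dft d L u γ = 0)
    (β : DTorus d L) :
    (2 * L + 1) ^ d * ‖u β‖ ^ 4 ≤ #(S + S) * ∑ β', ‖u β'‖ ^ 4 := by
  have h := norm_sq_apply_le_of_dft_support (fun γ => dft_mul_eq_zero (γ := γ) hu hu) β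
  simpa only [Pi.mul_apply, norm_mul, mul_pow, ← pow_add, Nat.reduceAdd] using h

end Support

section FlatSpectrum

variable {S : Finset (DTorus d L)} {a : ℂ} {u : DTorus d L → ℂ}

lemma sum_norm_sq_of_dft_eq_ite (hu : ∀ γ, dft d L u γ = if γ ∈ S then a else 0) :
    ∑ β, ‖u β‖ ^ 2 = #S * ‖a‖ ^ 2 := by
  rw [sum_norm_sq_eq_sum_norm_dft_sq]
  simp [hu, apply_ite (‖·‖ ^ 2), sum_ite_mem]

lemma apply_zero_of_dft_eq_ite (hu : ∀ γ, dft d L u γ = if γ ∈ S then a else 0) :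
    u 0 = normalization d L * (#S * a) := by
  rw [eq_sum_dft_mul_char u 0]
  simp [hu, sum_ite_mem]

lemma sq_card_mul_sum_norm_sq_le (hu : ∀ γ, dft d L u γ = if γ ∈ S then a else 0) :
    (#S * ∑ β, ‖u β‖ ^ 2) ^ 2 ≤ (2 * L + 1) ^ d * (#(S + S) * ∑ β, ‖u β‖ ^ 4) := by
  have hzero : #S * ∑ β, ‖u β‖ ^ 2 = (2 * L + 1) ^ d * ‖u 0‖ ^ 2 := by
    rw [sum_norm_sq_of_dft_eq_ite hu, apply_zero_of_dft_eq_ite hu]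
    simp only [norm_mul, Complex.norm_real, Complex.norm_natCast, mul_pow, Real.norm_eq_abs, sq_abs]
    linear_combination (-(#S : ℝ) ^ 2 * ‖a‖ ^ 2) * normalization_sq_mul d L
  have hsupp : ∀ γ ∉ S, dft d L u γ = 0 := fun γ hγ => by rw [hu, if_neg hγ]
  calc (#S * ∑ β, ‖u β‖ ^ 2) ^ 2
      = (2 * L + 1) ^ d * ((2 * L + 1) ^ d * ‖u 0‖ ^ 4) := by rw [hzero]; ring
    _ ≤ (2 * L + 1) ^ d * (#(S + S) * ∑ β, ‖u β‖ ^ 4) := by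
        gcongr ?_ * ?_
        exact norm_pow_four_apply_le_of_dft_support hsupp 0

end FlatSpectrum

section Cube

/-- The sup-norm ball `{|γ| ≤ m}` of the discrete torus. -/
def cube (d L m : ℕ) : Finset (DTorus d L) :=
  Fintype.piFinset fun _ => {x | dAbs L x ≤ m}

lemma mem_cube {m : ℕ} {γ : DTorus d L} : γ ∈ cube d L m ↔ ∀ j, dAbs L (γ j) ≤ m := by
  simp [cube]

lemma dAbs_eq_natAbs_valMinAbs (x : ZMod (2 * L + 1)) : dAbs L x = x.valMinAbs.natAbs :=
  (ZMod.valMinAbs_natAbs_eq_min x).symm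

lemma dAbs_add_le (x y : ZMod (2 * L + 1)) : dAbs L (x + y) ≤ dAbs L x + dAbs L y := by
  simp_rw [dAbs_eq_natAbs_valMinAbs]
  exact (ZMod.natAbs_valMinAbs_add_le x y).trans (Int.natAbs_add_le _ _)

lemma dAbs_intCast_le (z : ℤ) : dAbs L z ≤ z.natAbs := by
  rw [dAbs_eq_natAbs_valMinAbs]
  exact ZMod.natAbs_min_of_le_div_two _ _ _ (ZMod.coe_valMinAbs _) (ZMod.natAbs_valMinAbs_le _)

lemma filter_dAbs_le_eq_image (L m : ℕ) :
    ({x | dAbs L x ≤ m} : Finset (ZMod (2 * L + 1))) = (Icc (-m : ℤ) m).image (↑) := by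
  ext x
  simp only [mem_filter_univ, mem_image, mem_Icc]
  refine ⟨fun hx => ⟨x.valMinAbs, ?_, ZMod.coe_valMinAbs x⟩, ?_⟩
  · rw [dAbs_eq_natAbs_valMinAbs] at hx
    omega
  · rintro ⟨z, hz, rfl⟩
    exact (dAbs_intCast_le z).trans (by omega)

lemma injOn_intCast_Icc {m n : ℕ} (hmn : 2 * m < n) :
    Set.InjOn (Int.cast : ℤ → ZMod n) (Icc (-m : ℤ) m) := by
  intro x hx y hy hxy
  rw [coe_Icc, Set.mem_Icc] at hx hy
  rw [ZMod.intCast_eq_intCast_iff_dvd_sub] at hxy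
  have := Int.eq_zero_of_abs_lt_dvd hxy (abs_lt.2 (by omega))
  omega

lemma card_cube_le (d L m : ℕ) : #(cube d L m) ≤ (2 * m + 1) ^ d := by
  rw [cube, Fintype.card_piFinset_const, filter_dAbs_le_eq_image]
  gcongr
  refine card_image_le.trans ?_
  rw [Int.card_Icc]
  omega

lemma card_cube {m : ℕ} (hm : m ≤ L) : #(cube d L m) = (2 * m + 1) ^ d := by
  rw [cube, Fintype.card_piFinset_const, filter_dAbs_le_eq_image,
    card_image_of_injOn (injOn_intCast_Icc (by omega)), Int.card_Icc]
  congr 1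
  omega

lemma cube_add_cube_subset (d L m n : ℕ) : cube d L m + cube d L n ⊆ cube d L (m + n) := by
  intro γ hγ
  obtain ⟨α, hα, β, hβ, rfl⟩ := mem_add.1 hγ
  rw [mem_cube] at hα hβ ⊢
  exact fun j => (dAbs_add_le _ _).trans (add_le_add (hα j) (hβ j))

end Cube

lemma rpow_div_div_rpow_div_le {x c s p : ℝ} {d : ℕ} (hx : 0 ≤ x) (hc : 0 ≤ c) (hp : 0 ≤ p)
    (h : (x / c) ^ d ≤ s) : x ^ (d / p) / c ^ (d / p) ≤ s ^ (1 / p) := by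
  rw [← Real.div_rpow hx hc, div_eq_mul_one_div (d : ℝ), Real.rpow_mul (by positivity),
    Real.rpow_natCast]
  gcongr

/-- The functions `u` with `û(γ) = (2m+1)^{-d/2}` for `|γ| ≤ m` and `û(γ) = 0` otherwise; the
theorem is about `m = ⌊εL⌋`. -/
def IsTrialFunction (m : ℕ) (u : DTorus d L → ℂ) : Prop :=
  ∀ γ, dft d L u γ = if γ ∈ cube d L m then (((2 * m + 1 : ℝ) ^ (-(d : ℝ) / 2) : ℝ) : ℂ) else 0

namespace IsTrialFunction

variable {m : ℕ} {u : DTorus d L → ℂ}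

lemma sum_norm_sq (hu : IsTrialFunction m u) (hm : m ≤ L) : ∑ β, ‖u β‖ ^ 2 = 1 := by
  rw [sum_norm_sq_of_dft_eq_ite hu, Complex.norm_real, Real.norm_eq_abs, sq_abs,
    sq_rpow_neg_div_two (by positivity), Real.rpow_natCast, card_cube hm]
  push_cast
  exact mul_inv_cancel₀ (by positivity)

lemma dEnergy_le (hu : IsTrialFunction m u) (hm : m ≤ L) :
    dEnergy d L u ≤ d * (2 * Real.pi * m / (2 * L + 1)) ^ 2 := by
  have h := dEnergy_le_mul_sum_norm_sq (S := cube d L m) (fun γ hγ => by rw [hu, if_neg hγ])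
    fun γ hγ => dSymb_le_of_dAbs_le fun j => Nat.cast_le.2 (mem_cube.1 hγ j)
  rwa [hu.sum_norm_sq hm, mul_one] at h

lemma le_sum_norm_pow_four (hu : IsTrialFunction m u) (hm : m ≤ L) :
    ((2 * m + 1 : ℝ) / (2 * (2 * L + 1))) ^ d ≤ ∑ β, ‖u β‖ ^ 4 := by
  have hdoubling : (#(cube d L m + cube d L m) : ℝ) ≤ (2 * (2 * m + 1)) ^ d := by
    have : #(cube d L m + cube d L m) ≤ (2 * (2 * m + 1)) ^ d :=
      (card_le_card (cube_add_cube_subset d L m m)).trans <|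
        (card_cube_le d L (m + m)).trans (Nat.pow_le_pow_left (by omega) d)
    exact_mod_cast this
  have hflat := sq_card_mul_sum_norm_sq_le hu
  rw [hu.sum_norm_sq hm, mul_one, card_cube hm] at hflat
  push_cast at hflat
  rw [div_pow, div_le_iff₀ (by positivity)]
  refine le_of_mul_le_mul_left ?_ (show (0 : ℝ) < (2 * m + 1) ^ d by positivity)
  calc (2 * m + 1 : ℝ) ^ d * (2 * m + 1) ^ d
      ≤ (2 * L + 1) ^ d * (#(cube d L m + cube d L m) * ∑ β, ‖u β‖ ^ 4) := by rwa [← sq]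
    _ ≤ (2 * L + 1) ^ d * ((2 * (2 * m + 1)) ^ d * ∑ β, ‖u β‖ ^ 4) := by gcongr
    _ = (2 * m + 1) ^ d * ((∑ β, ‖u β‖ ^ 4) * (2 * (2 * L + 1)) ^ d) := by
        rw [mul_pow, mul_pow]
        ring

lemma dEnergy_le_mul_sq (hu : IsTrialFunction m u) (hm : m ≤ L) {ε : ℝ} (hε : 0 ≤ ε)
    (hmε : m ≤ ε * L) : dEnergy d L u ≤ d * Real.pi ^ 2 * ε ^ 2 := by
  have hfreq : 2 * Real.pi * m / (2 * L + 1) ≤ Real.pi * ε := by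
    rw [div_le_iff₀ (by positivity)]
    nlinarith [Real.pi_pos]
  calc dEnergy d L u
      ≤ d * (2 * Real.pi * m / (2 * L + 1)) ^ 2 := hu.dEnergy_le hm
    _ ≤ d * (Real.pi * ε) ^ 2 := by gcongr
    _ = d * Real.pi ^ 2 * ε ^ 2 := by ring

lemma rpow_div_le_rpow_sum_norm_pow_four (hu : IsTrialFunction m u) (hm : m ≤ L) {ε : ℝ}
    (hε0 : 0 ≤ ε) (hε1 : ε ≤ 1) (hεm : ε * L < m + 1) :
    ε ^ ((d : ℝ) / 4) / 6 ^ ((d : ℝ) / 4) ≤ (∑ β, ‖u β‖ ^ 4) ^ ((1 : ℝ) / 4) := by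
  have hratio : ε / 6 ≤ (2 * m + 1) / (2 * (2 * L + 1)) := by
    rw [div_le_div_iff₀ (by positivity) (by positivity)]
    linarith
  exact rpow_div_div_rpow_div_le hε0 (by norm_num) (by norm_num) <|
    (pow_le_pow_left₀ (by positivity) hratio d).trans (hu.le_sum_norm_pow_four hm)

end IsTrialFunction

lemma isTrialFunction_natFloor_iff {r : ℝ} (hr : 0 ≤ r) {u : DTorus d L → ℂ} :
    IsTrialFunction ⌊r⌋₊ u ↔ ∀ γ, dft d L u γ = if ∀ j, (dAbs L (γ j) : ℝ) ≤ r
      then (((2 * ⌊r⌋₊ + 1 : ℝ) ^ (-(d : ℝ) / 2) : ℝ) : ℂ) else 0 := by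
  simp_rw [IsTrialFunction, mem_cube, Nat.le_floor_iff hr]

end DTorus

theorem trial_function_fourier_ball_general (d : ℕ) :
    ∃ C > (0:ℝ), ∀ (ε : ℝ) (L : ℕ), 0 ≤ ε → ε ≤ 1 →
      ∀ u : DTorus d L → ℂ,
        (∀ γ : DTorus d L,
          dft d L u γ = if (∀ j, (dAbs L (γ j) : ℝ) ≤ ε * L)
            then (((2 * ⌊ε * L⌋₊ + 1 : ℝ) ^ (-(d : ℝ) / 2) : ℝ) : ℂ) else 0) →
        (∑ β, ‖u β‖ ^ 2) = 1 ∧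
        dEnergy d L u ≤ C * ε ^ 2 ∧
        ε ^ ((d : ℝ) / 4) / C ≤ (∑ β, ‖u β‖ ^ 4) ^ ((1:ℝ)/4) := by
  refine ⟨d * Real.pi ^ 2 + 6 ^ ((d : ℝ) / 4), by positivity, fun ε L hε0 hε1 u hu => ?_⟩
  rw [← DTorus.isTrialFunction_natFloor_iff (by positivity)] at hu
  have hmL : ⌊ε * L⌋₊ ≤ L :=
    Nat.floor_le_of_le (mul_le_of_le_one_left (Nat.cast_nonneg L) hε1)
  refine ⟨hu.sum_norm_sq hmL, ?_, ?_⟩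
  · refine (hu.dEnergy_le_mul_sq hmL hε0 (Nat.floor_le (by positivity))).trans ?_
    gcongr
    exact le_add_of_nonneg_right (by positivity)
  · refine le_trans ?_
      (hu.rpow_div_le_rpow_sum_norm_pow_four hmL hε0 hε1 (Nat.lt_floor_add_one _))
    gcongr
    exact le_add_of_nonneg_left (by positivity)

/-- the trial function whose Fourier transform is the normalized
indicator of the ball `{|γ| ≤ εL}`, i.e. `û(γ) = (2⌊εL⌋+1)^{-d/2}` for `|γ| ≤ εL`
and `0` otherwise, satisfies `‖u‖₂ = 1`, `⟨-Δ_L^P u, u⟩ ≤ Cε²` and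
`‖u‖₄ ≥ ε^{d/4}/C`, with `C = C(d)`. -/
theorem trial_function_fourier_ball (d : ℕ) (hd : 1 ≤ d) :
    ∃ C > (0:ℝ), ∀ (ε : ℝ) (L : ℕ), 0 < ε → ε < 1 → 1 ≤ ε * L →
      ∀ u : DTorus d L → ℂ,
        (∀ γ : DTorus d L,
          dft d L u γ = if (∀ j, (dAbs L (γ j) : ℝ) ≤ ε * L)
            then (((2 * ⌊ε * L⌋₊ + 1 : ℝ) ^ (-(d : ℝ) / 2) : ℝ) : ℂ) else 0) →
        (∑ β, ‖u β‖ ^ 2) = 1 ∧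
        dEnergy d L u ≤ C * ε ^ 2 ∧
        ε ^ ((d : ℝ) / 4) / C ≤ (∑ β, ‖u β‖ ^ 4) ^ ((1:ℝ)/4) := by
  obtain ⟨C, hC, h⟩ := trial_function_fourier_ball_general d
  exact ⟨C, hC, fun ε L hε hε1 _ => h ε L hε.le hε1.le⟩
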